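/- Path segmentation lemma (the estimate culminating in equation (10) of the paper): let w and w' be weight functions on a finite vertex set V with w'(u,v) ≤ w(u,v) for all u,v. Let A ≥ 1, B ≥ 0, and δ > 0 be real numbers and h ≥ 1 a natural number. Let x = u_0, u_1, …, u_m = y (m ≥ 1) be a shortest path for w, i.e., Σ_{j<m} w(u_j, u_{j+1}) = d_w(x,y), with 0 < d_w(x,y) < ∞, and suppose that for all indices 0 ≤ a ≤ b ≤ m with d_w(u_a, u_b) ≤ δ one has d_{w'}^{(h)}(u_a, u_b) ≤ A·d_w(u_a, u_b) + B. Then, setting q = ⌈d_w(x,y)/δ⌉, one has d_{w'}^{(q(h+1)−1)}(x, y) ≤ A·d_w(x,y) + q·B. -/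

import Mathlib

open scoped ENNReal BigOperators

/-- The `t`-hop-bounded distance for a weight function `w` on `V`: the infimum,
over all sequences `u = x 0, x 1, ..., x m = v` with `m <= t`, of
the total weight `Sum_{j<m} w (x j) (x (j+1))`. -/
noncomputable def hopDist {V : Type*} (w : V → V → ℝ≥0∞) (t : ℕ) (u v : V) : ℝ≥0∞ :=
  ⨅ (m : ℕ) (_ : m ≤ t) (x : ℕ → V) (_ : x 0 = u) (_ : x m = v),
    ∑ j ∈ Finset.range m, w (x j) (x (j + 1))

/-- The distance for a weight function `w`: the infimum of hop-bounded distances. -/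
noncomputable def graphDist {V : Type*} (w : V → V → ℝ≥0∞) (u v : V) : ℝ≥0∞ :=
  ⨅ t : ℕ, hopDist w t u v

theorem hopDist_le_path {V : Type*} (w : V → V → ℝ≥0∞) (t k : ℕ) (hk : k ≤ t) (p : ℕ → V) :
    hopDist w t (p 0) (p k) ≤ ∑ j ∈ Finset.range k, w (p j) (p (j + 1)) := by
  unfold hopDist
  exact iInf_le_of_le k (iInf_le_of_le hk (iInf_le_of_le p (iInf_le_of_le rfl
    (iInf_le_of_le rfl le_rfl))))

theorem hopDist_lt_path {V : Type*} (w : V → V → ℝ≥0∞) (t : ℕ) (a b : V) (c : ℝ≥0∞)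
    (hc : hopDist w t a b < c) : ∃ k, k ≤ t ∧ ∃ p : ℕ → V, p 0 = a ∧ p k = b ∧
      ∑ j ∈ Finset.range k, w (p j) (p (j + 1)) < c := by
  unfold hopDist at hc
  simp only [iInf_lt_iff] at hc
  obtain ⟨k, hk, p, h0, h1, hs⟩ := hc
  exact ⟨k, hk, p, h0, h1, hs⟩

theorem hopDist_triangle {V : Type*} (w : V → V → ℝ≥0∞) (s t : ℕ) (a b c : V) :
    hopDist w (s + t) a c ≤ hopDist w s a b + hopDist w t b c := by
  apply ENNReal.le_of_forall_pos_le_add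
  intro ε hε hlt
  have hε2 : ((ε : ℝ≥0∞) / 2) ≠ 0 := by
    simp [hε.ne']
  obtain ⟨h1, h2⟩ := ENNReal.add_lt_top.1 hlt
  obtain ⟨k, hk, p, p0, p1, ps⟩ := hopDist_lt_path w s a b _ (ENNReal.lt_add_right h1.ne hε2)
  obtain ⟨l, hl, r, r0, r1, rs⟩ := hopDist_lt_path w t b c _ (ENNReal.lt_add_right h2.ne hε2)
  let z : ℕ → V := fun j => if j ≤ k then p j else r (j - k)
  have zlo : ∀ j, j ≤ k → z j = p j := fun j hj => if_pos hj
  have zhi : ∀ j, z (k + j) = r j := by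
    intro j
    by_cases hj : j = 0
    · subst hj
      rw [Nat.add_zero, zlo k le_rfl, p1, r0]
    · have : ¬ (k + j ≤ k) := by omega
      simp [z, hj]
  have hz := hopDist_le_path w (s + t) (k + l) (by omega) z
  rw [zlo 0 (Nat.zero_le _), zhi l, p0, r1, Finset.sum_range_add] at hz
  have e1 : ∑ j ∈ Finset.range k, w (z j) (z (j + 1)) =
      ∑ j ∈ Finset.range k, w (p j) (p (j + 1)) := by
    apply Finset.sum_congr rfl
    intro j hj
    have := Finset.mem_range.1 hj
    rw [zlo j (by omega), zlo (j + 1) (by omega)]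
  have e2 : ∑ j ∈ Finset.range l, w (z (k + j)) (z (k + j + 1)) =
      ∑ j ∈ Finset.range l, w (r j) (r (j + 1)) := by
    apply Finset.sum_congr rfl
    intro j _
    rw [zhi j, Nat.add_assoc, zhi (j + 1)]
  rw [e1, e2] at hz
  calc _ ≤ _ := hz
    _ ≤ _ := add_le_add ps.le rs.le
    _ = hopDist w s a b + hopDist w t b c + (ε / 2 + ε / 2 : ℝ≥0∞) := by ring
    _ = _ := by rw [ENNReal.add_halves]

theorem hopDist_mono {V : Type*} (w : V → V → ℝ≥0∞) (s t : ℕ) (hst : s ≤ t) (a b : V) :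
    hopDist w t a b ≤ hopDist w s a b := by
  apply le_of_forall_gt
  intro c hc
  obtain ⟨k, hk, p, p0, p1, ps⟩ := hopDist_lt_path w s a b c hc
  have := hopDist_le_path w t k (by omega) p
  rw [p0, p1] at this
  exact this.trans_lt ps

theorem hopDist_edge {V : Type*} (w : V → V → ℝ≥0∞) (a b : V) :
    hopDist w 1 a b ≤ w a b := by
  have := hopDist_le_path w 1 1 le_rfl (fun j => if j = 0 then a else b)
  simpa using this

theorem graphDist_le_Ico {V : Type*} (w : V → V → ℝ≥0∞) (u : ℕ → V) (a b : ℕ) (hab : a ≤ b) :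
    graphDist w (u a) (u b) ≤ ∑ j ∈ Finset.Ico a b, w (u j) (u (j + 1)) := by
  have := hopDist_le_path w (b - a) (b - a) le_rfl (fun j => u (a + j))
  simp only [Nat.add_zero, Nat.add_sub_cancel' hab] at this
  rw [Finset.sum_Ico_eq_sum_range]
  exact (iInf_le _ _).trans this

theorem seg_aux {V : Type*} (w w' : V → V → ℝ≥0∞) (hle : ∀ a b, w' a b ≤ w a b)
    (A B δ : ℝ≥0∞) (hA : 1 ≤ A) (h m : ℕ) (u : ℕ → V)
    (hseg : ∀ a b : ℕ, a ≤ b → b ≤ m → ∑ j ∈ Finset.Ico a b, w (u j) (u (j + 1)) ≤ δ →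
      hopDist w' h (u a) (u b) ≤ A * ∑ j ∈ Finset.Ico a b, w (u j) (u (j + 1)) + B)
    (q : ℕ) : ∀ a ≤ m, ∑ j ∈ Finset.Ico a m, w (u j) (u (j + 1)) ≤ ((q + 1 : ℕ) : ℝ≥0∞) * δ →
      hopDist w' ((q + 1) * (h + 1) - 1) (u a) (u m) ≤
        A * ∑ j ∈ Finset.Ico a m, w (u j) (u (j + 1)) + ((q + 1 : ℕ) : ℝ≥0∞) * B := by
  induction q with
  | zero =>
    intro a ha hs
    have := hseg a m ha le_rfl (by simpa using hs)
    simpa using this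
  | succ q ih =>
    intro a ha hs
    by_cases hsm : ∑ j ∈ Finset.Ico a m, w (u j) (u (j + 1)) ≤ δ
    · refine (hopDist_mono w' h _ ?_ _ _).trans ((hseg a m ha le_rfl hsm).trans ?_)
      · have : (q + 1 + 1) * (h + 1) = (q + 1) * (h + 1) + h + 1 := by ring
        omega
      · gcongr
        calc B = 1 * B := (one_mul B).symm
          _ ≤ _ := by gcongr; exact_mod_cast (by omega : 1 ≤ q + 1 + 1)
    · have hex : ∃ b, a ≤ b ∧ b < m ∧ ∑ j ∈ Finset.Ico a b, w (u j) (u (j + 1)) ≤ δ ∧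
          δ < ∑ j ∈ Finset.Ico a (b + 1), w (u j) (u (j + 1)) := by
        by_contra hno
        push Not at hno
        apply hsm
        have key : ∀ b, a ≤ b → b ≤ m → ∑ j ∈ Finset.Ico a b, w (u j) (u (j + 1)) ≤ δ := by
          intro b hb
          induction b, hb using Nat.le_induction with
          | base => intro _; simp
          | succ b hb ihb => intro hbm; exact hno b hb (by omega) (ihb (by omega))
        exact key m ha le_rfl
      obtain ⟨b, hab, hbm, hb1, hb2⟩ := hex
      have hsplit := Finset.sum_Ico_consecutive (fun j => w (u j) (u (j + 1)))
        (show a ≤ b + 1 by omega) (show b + 1 ≤ m by omega)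
      have hrest : ∑ j ∈ Finset.Ico (b + 1) m, w (u j) (u (j + 1)) ≤
          ((q + 1 : ℕ) : ℝ≥0∞) * δ := by
        by_contra hlt
        push Not at hlt
        have h3 := ENNReal.add_lt_add hb2 hlt
        rw [hsplit] at h3
        refine absurd hs (not_le.2 (lt_of_eq_of_lt ?_ h3))
        push_cast
        ring
      have hi := ih (b + 1) (by omega) hrest
      have hsg := hseg a b hab hbm.le hb1
      have hed : hopDist w' 1 (u b) (u (b + 1)) ≤ A * w (u b) (u (b + 1)) :=
        (hopDist_edge _ _ _).trans ((hle _ _).trans (by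
          calc w (u b) (u (b + 1)) = 1 * w (u b) (u (b + 1)) := (one_mul _).symm
            _ ≤ _ := by gcongr))
      have hlen : (q + 1 + 1) * (h + 1) - 1 = h + (1 + ((q + 1) * (h + 1) - 1)) := by
        have : (q + 1 + 1) * (h + 1) = (q + 1) * (h + 1) + h + 1 := by ring
        have : 0 < (q + 1) * (h + 1) := by positivity
        omega
      rw [hlen, ← hsplit, Finset.sum_Ico_succ_top hab]
      calc _ ≤ _ := hopDist_triangle w' h _ (u a) (u b) (u m)
        _ ≤ _ := add_le_add_right (hopDist_triangle w' 1 _ (u b) (u (b + 1)) (u m)) _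
        _ ≤ _ := add_le_add hsg (add_le_add hed hi)
        _ = _ := by push_cast; ring

/-- path segmentation lemma (the estimate culminating in
equation (10) of the paper). -/
theorem path_segmentation {V : Type*} [Fintype V] (w w' : V → V → ℝ≥0∞)
    (hwsymm : ∀ a b, w a b = w b a) (hw'symm : ∀ a b, w' a b = w' b a)
    (hle : ∀ a b, w' a b ≤ w a b)
    (A B δ : ℝ) (hA : 1 ≤ A) (hB : 0 ≤ B) (hδ : 0 < δ)
    (h : ℕ) (hh1 : 1 ≤ h)
    (x y : V) (m : ℕ) (hm : 1 ≤ m) (u : ℕ → V) (hu0 : u 0 = x) (hum : u m = y)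
    (hpath : ∑ j ∈ Finset.range m, w (u j) (u (j + 1)) = graphDist w x y)
    (hpos : 0 < graphDist w x y) (hfin : graphDist w x y < ⊤)
    (hseg : ∀ a b : ℕ, a ≤ b → b ≤ m →
      graphDist w (u a) (u b) ≤ ENNReal.ofReal δ →
      hopDist w' h (u a) (u b) ≤
        ENNReal.ofReal A * graphDist w (u a) (u b) + ENNReal.ofReal B) :
    hopDist w' (⌈(graphDist w x y).toReal / δ⌉₊ * (h + 1) - 1) x y ≤
      ENNReal.ofReal A * graphDist w x y +
        (⌈(graphDist w x y).toReal / δ⌉₊ : ℝ≥0∞) * ENNReal.ofReal B := by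
  set D := graphDist w x y with hD
  have hDpos : 0 < D.toReal := ENNReal.toReal_pos hpos.ne' hfin.ne
  have hqpos : 0 < ⌈D.toReal / δ⌉₊ := Nat.ceil_pos.2 (by positivity)
  have hqle : D.toReal ≤ (⌈D.toReal / δ⌉₊ : ℝ) * δ := (div_le_iff₀ hδ).1 (Nat.le_ceil _)
  obtain ⟨q, hq⟩ : ∃ q, ⌈D.toReal / δ⌉₊ = q + 1 := ⟨_, (Nat.succ_pred_eq_of_pos hqpos).symm⟩
  rw [hq] at hqle ⊢
  have hIco : ∑ j ∈ Finset.Ico 0 m, w (u j) (u (j + 1)) = D := by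
    rw [← hpath, Finset.range_eq_Ico]
  have hDle : D ≤ ((q + 1 : ℕ) : ℝ≥0∞) * ENNReal.ofReal δ := by
    rw [← ENNReal.ofReal_toReal hfin.ne, ← ENNReal.ofReal_natCast,
      ← ENNReal.ofReal_mul (by positivity)]
    exact ENNReal.ofReal_le_ofReal hqle
  have := seg_aux w w' hle (ENNReal.ofReal A) (ENNReal.ofReal B) (ENNReal.ofReal δ)
    (by simpa using hA) h m u (by
      intro a b hab hbm hs
      have hg := graphDist_le_Ico w u a b hab
      refine (hseg a b hab hbm (hg.trans hs)).trans ?_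
      gcongr) q 0 (Nat.zero_le _) (by rw [hIco]; exact hDle)
  rw [hIco, hu0, hum] at this
  exact this
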